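/- Let p be a prime and r ≥ 2 an integer, and consider the labeled family of 2 + p·(r−1) vectors in ℚ^r given by e_1, v = e_2 + ⋯ + e_r, and v_{k,ℓ} = k·e_1 + e_ℓ for 2 ≤ ℓ ≤ r and 0 ≤ k < p (with k regarded as a rational number), with i the label of e_1 and j the label of v. Then b_{ij} = (r−1)·p^{r−2}, b^{ij} = (r−1)·((p−1)/2)·p^{r−1}, b_i^j = p^{r−1}, and b_j^i = p^{r−1} − 1 + (r−1)·(r−2)·((p−1)/2)·p^{r−2}. Consequently, the α-ratio α = (b^{ij}·b_{ij})/(b_i^j·b_j^i) of this configuration converges to (r−1)²/(2 + (r−1)·(r−2)) as p → ∞. -/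

import Mathlib

/-- The index (label) type of the rational configuration: one label for `e₁`, one for
`v = e₂ + ⋯ + e_r`, and one for each vector `v_{k,ℓ} = k·e₁ + e_ℓ` with `ℓ ∈ {2, …, r}`
(encoded as a nonzero index of `Fin r`) and integer `0 ≤ k < p`. -/
abbrev QrpIndex (r p : ℕ) : Type :=
  Unit ⊕ Unit ⊕ ({l : Fin r // l.val ≠ 0} × Fin p)

/-- The vectors of the rational configuration in `ℚ^r`: the label `Sum.inl ()` carries
`e₁`, the label `Sum.inr (Sum.inl ())` carries `v = e₂ + ⋯ + e_r`, and the label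
`Sum.inr (Sum.inr (ℓ, k))` carries `v_{k,ℓ} = k·e₁ + e_ℓ`, with `k` regarded as a
rational number. -/
def qrpVec (r p : ℕ) : QrpIndex r p → (Fin r → ℚ)
  | Sum.inl _ => fun m => if m.val = 0 then 1 else 0
  | Sum.inr (Sum.inl _) => fun m => if m.val = 0 then 0 else 1
  | Sum.inr (Sum.inr lk) => fun m =>
      if m.val = 0 then ((lk.2 : ℕ) : ℚ) else if m = lk.1.1 then 1 else 0

/-- The label of the vector `e₁`. -/
def qrpI (r p : ℕ) : QrpIndex r p := Sum.inl ()

/-- The label of the vector `v = e₂ + ⋯ + e_r`. -/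
def qrpJ (r p : ℕ) : QrpIndex r p := Sum.inr (Sum.inl ())

/-- A finite set `s` of labels of a labeled family `w` of vectors forms a vector-space
basis if the family of vectors indexed by `s` is linearly independent and spans. -/
def FormsBasis (K : Type*) {ι : Type*} [Field K] {V : Type*} [AddCommGroup V]
    [Module K V] (w : ι → V) (s : Finset ι) : Prop :=
  LinearIndependent K (fun x : s => w x.val) ∧ Submodule.span K (w '' ↑s) = ⊤

/-- `b_{ij}(p)`: the number of `r`-element subsets of labels forming a basis of `ℚ^r`
and containing both the label `i` of `e₁` and the label `j` of `v`. -/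
noncomputable def qbij (r p : ℕ) : ℕ :=
  Nat.card {s : Finset (QrpIndex r p) //
    s.card = r ∧ FormsBasis ℚ (qrpVec r p) s ∧ qrpI r p ∈ s ∧ qrpJ r p ∈ s}

/-- `b^{ij}(p)`: the number of such bases containing neither `i` nor `j`. -/
noncomputable def qbnij (r p : ℕ) : ℕ :=
  Nat.card {s : Finset (QrpIndex r p) //
    s.card = r ∧ FormsBasis ℚ (qrpVec r p) s ∧ qrpI r p ∉ s ∧ qrpJ r p ∉ s}

/-- `b_i^j(p)`: the number of such bases containing `i` but not `j`. -/
noncomputable def qbinj (r p : ℕ) : ℕ :=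
  Nat.card {s : Finset (QrpIndex r p) //
    s.card = r ∧ FormsBasis ℚ (qrpVec r p) s ∧ qrpI r p ∈ s ∧ qrpJ r p ∉ s}

/-- `b_j^i(p)`: the number of such bases containing `j` but not `i`. -/
noncomputable def qbjni (r p : ℕ) : ℕ :=
  Nat.card {s : Finset (QrpIndex r p) //
    s.card = r ∧ FormsBasis ℚ (qrpVec r p) s ∧ qrpI r p ∉ s ∧ qrpJ r p ∈ s}

/-! A set of `r` labels is a basis exactly when no nonzero functional vanishes on its vectors.
Write a functional as `(x, b)`, with `x` its value at `e₁` and `b_ℓ` its value at `e_ℓ`; then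
`v_{k,ℓ}` imposes `k x + b_ℓ = 0` and `v` imposes `∑ b_ℓ = 0`. As soon as `e₁`, or two vectors
with the same `ℓ`, force `x = 0`, it only matters which `ℓ` occur at all, so the bases are
recognised by the number of their vectors over each `ℓ`, and counting them is counting subsets of
prescribed sizes. The one other case is `v` together with one vector `v_{k_ℓ,ℓ}` for each `ℓ`:
this is a basis if and only if `∑ k_ℓ ≠ 0`, which in characteristic zero excludes only `k = 0`.
The counts are thus polynomials in `p`, and dividing by the dominant power of `p` gives the limit
as a value at `p⁻¹ = 0`. -/

section FormsBasis

variable {F V W ι : Type*} [Field F] [AddCommGroup V] [Module F V] [AddCommGroup W] [Module F W]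

theorem formsBasis_iff_forall_dual [FiniteDimensional F V] {w : ι → V} {s : Finset ι} :
    FormsBasis F w s ↔
      s.card = Module.finrank F V ∧
        ∀ φ : Module.Dual F V, (∀ x ∈ s, φ (w x) = 0) → φ = 0 := by
  have hrange : Set.range (fun x : s => w x) = w '' ↑s := by
    ext; simp
  have hdual : Submodule.span F (w '' ↑s) = ⊤ ↔
      ∀ φ : Module.Dual F V, (∀ x ∈ s, φ (w x) = 0) → φ = 0 := by
    rw [← Submodule.dualAnnihilator_eq_bot_iff, Submodule.eq_bot_iff]
    refine forall_congr' fun φ => imp_congr_left ?_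
    rw [← SetLike.mem_coe, Submodule.coe_dualAnnihilator_span]
    simp [Set.subset_def]
  rw [FormsBasis, ← hdual]
  refine and_congr_left fun hspan => ?_
  rw [linearIndependent_iff_card_eq_finrank_span, hrange, Set.finrank, hspan, finrank_top,
    Fintype.card_coe]

theorem formsBasis_comp_linearEquiv (e : V ≃ₗ[F] W) {w : ι → V} {s : Finset ι} :
    FormsBasis F (e ∘ w) s ↔ FormsBasis F w s := by
  refine and_congr (LinearMap.linearIndependent_iff e.toLinearMap e.ker) ?_
  rw [Set.image_comp, ← LinearEquiv.coe_coe, Submodule.span_image,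
    Submodule.map_eq_top_iff]

end FormsBasis

section LabelSet

variable {L κ : Type*} [Fintype L]

/-- The set of labels with parts `A` and `B` in the first two summands and with fibres `f l` over
the points `l : L` in the third. -/
def labelSet (A B : Finset Unit) (f : L → Finset κ) : Finset (Unit ⊕ Unit ⊕ (L × κ)) :=
  A.disjSum (B.disjSum ((Finset.univ.sigma f).map (Equiv.sigmaEquivProd L κ).toEmbedding))

theorem forall_mem_labelSet {A B : Finset Unit} {f : L → Finset κ}
    {P : Unit ⊕ Unit ⊕ (L × κ) → Prop} :
    (∀ x ∈ labelSet A B f, P x) ↔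
      (() ∈ A → P (.inl ())) ∧ (() ∈ B → P (.inr (.inl ()))) ∧
        ∀ l, ∀ k ∈ f l, P (.inr (.inr (l, k))) := by
  simp [labelSet, Unique.forall_iff]

theorem card_labelSet (A B : Finset Unit) (f : L → Finset κ) :
    (labelSet A B f).card = A.card + (B.card + ∑ l, (f l).card) := by
  simp [labelSet]

theorem labelSet_injective (A B : Finset Unit) :
    Function.Injective (labelSet A B : (L → Finset κ) → _) := by
  intro f g h
  ext l k
  simpa [labelSet] using congrArg (Sum.inr (Sum.inr (l, k)) ∈ ·) h

theorem range_labelSet (A B : Finset Unit) :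
    Set.range (labelSet A B : (L → Finset κ) → _) =
      {s | (.inl () ∈ s ↔ () ∈ A) ∧ (.inr (.inl ()) ∈ s ↔ () ∈ B)} := by
  ext s
  constructor
  · rintro ⟨f, rfl⟩
    simp [labelSet]
  · rintro ⟨hA, hB⟩
    refine ⟨fun l => s.preimage (fun k => .inr (.inr (l, k))) fun k _ k' _ h => by simpa using h,
      ?_⟩
    ext (⟨⟩ | ⟨⟨⟩⟩ | ⟨l, k⟩)
    · simp [labelSet, hA]
    · simp [labelSet, hB]
    · simpa [labelSet] using Finset.mem_preimage

end LabelSet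

section Profile

variable {L κ : Type*}

/-- The sizes of the members of a family of finite sets. The counts below are organised by the
profile of the family of fibres of a basis. -/
def profile (f : L → Finset κ) (l : L) : ℕ := (f l).card

theorem profile_eq_one_iff {f : L → Finset κ} :
    profile f = 1 ↔ ∃ g : L → κ, (fun l => {g l}) = f := by
  simp [funext_iff, profile, Finset.card_eq_one, Classical.skolem, eq_comm]

variable [Fintype L] [Fintype κ]

theorem ncard_profile_preimage_singleton (c : L → ℕ) :
    (profile ⁻¹' {c} : Set (L → Finset κ)).ncard = ∏ l, (Fintype.card κ).choose (c l) := by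
  classical
  have hpi : (profile ⁻¹' {c} : Set (L → Finset κ)) =
      ↑(Fintype.piFinset fun l => Finset.powersetCard (c l) (Finset.univ : Finset κ)) := by
    ext f
    simp [profile, funext_iff]
  rw [hpi, Set.ncard_coe_finset]
  simp

theorem ncard_profile_preimage {C : Finset (L → ℕ)} {N : ℕ}
    (hC : ∀ c ∈ C, ∏ l, (Fintype.card κ).choose (c l) = N) :
    (profile ⁻¹' (C : Set (L → ℕ)) : Set (L → Finset κ)).ncard = C.card * N := by
  rw [← Nat.card_coe_set_eq,
    Finset.card_preimage_eq_sum_card_image_eq fun _ _ => Set.toFinite _]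
  refine Finset.sum_const_nat fun c hc => ?_
  exact (ncard_profile_preimage_singleton c).trans (hC c hc)

end Profile

section Sizes

open Function

variable {L : Type*}

theorem update_one_injective [DecidableEq L] {v : ℕ} (hv : v ≠ 1) :
    Injective fun l : L => update (1 : L → ℕ) l v := by
  intro l l' h
  by_contra hne
  simpa [update_of_ne hne, hv] using congrFun h l

theorem update_one_ne_zero [DecidableEq L] {c : L → ℕ} (h : {l | c l = 0}.Subsingleton)
    {l₁ : L} (h₁ : c l₁ = 0) (l : L) : update c l₁ 1 l ≠ 0 := by
  rw [update_apply]
  split_ifs with hl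
  exacts [one_ne_zero, fun h₀ => hl (h h₀ h₁)]

variable [Fintype L] {c : L → ℕ}

theorem eq_one_iff_ne_zero_and_sum_eq_card :
    c = 1 ↔ (∀ l, c l ≠ 0) ∧ ∑ l, c l = Fintype.card L := by
  refine ⟨by rintro rfl; simp, fun ⟨hne, hsum⟩ => ?_⟩
  have hle (l : L) : 1 ≤ c l := Nat.one_le_iff_ne_zero.mpr (hne l)
  have heq := (Finset.sum_eq_sum_iff_of_le (s := Finset.univ) fun l _ => hle l).mp (by simp [hsum])
  exact funext fun l => (heq l (Finset.mem_univ l)).symm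

variable [DecidableEq L]

theorem sum_update_add (c : L → ℕ) (l : L) (v : ℕ) :
    ∑ i, update c l v i + c l = ∑ i, c i + v := by
  rw [Finset.sum_update_of_mem (Finset.mem_univ l), ← Finset.add_sum_erase _ c (Finset.mem_univ l),
    Finset.sdiff_singleton_eq_erase]
  ring

theorem exists_update_one_two_eq_iff :
    (∃ l₀, update (1 : L → ℕ) l₀ 2 = c) ↔ (∀ l, c l ≠ 0) ∧ ∑ l, c l = Fintype.card L + 1 := by
  constructor
  · rintro ⟨l₀, rfl⟩
    refine ⟨fun l => ?_, by simpa using sum_update_add (1 : L → ℕ) l₀ 2⟩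
    rw [update_apply]
    split_ifs <;> simp
  · rintro ⟨hne, hsum⟩
    obtain ⟨l₀, -, h₀⟩ : ∃ l₀ ∈ Finset.univ, 1 < c l₀ :=
      Finset.exists_lt_of_sum_lt (by simp [hsum])
    have hsum' := sum_update_add c l₀ (c l₀ - 1)
    have hone : update c l₀ (c l₀ - 1) = 1 :=
      eq_one_iff_ne_zero_and_sum_eq_card.mpr ⟨fun l => by
        rw [update_apply]
        split_ifs
        exacts [by omega, hne l], by omega⟩
    have htwo : c l₀ = 2 := by
      have hpred := congrFun hone l₀
      rw [update_self, Pi.one_apply] at hpred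
      omega
    exact ⟨l₀, by rw [← hone, update_idem, ← htwo, update_eq_self]⟩

theorem exists_update_one_zero_eq_iff :
    (∃ l₁, update (1 : L → ℕ) l₁ 0 = c) ↔
      {l | c l = 0}.Subsingleton ∧ ∑ l, c l + 1 = Fintype.card L := by
  constructor
  · rintro ⟨l₁, rfl⟩
    refine ⟨?_, by simpa using sum_update_add (1 : L → ℕ) l₁ 0⟩
    simp [Set.Subsingleton, update_apply]
  · rintro ⟨hsub, hsum⟩
    obtain ⟨l₁, -, h₁⟩ : ∃ l₁ ∈ Finset.univ, c l₁ < 1 :=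
      Finset.exists_lt_of_sum_lt (by simp [← hsum])
    rw [Nat.lt_one_iff] at h₁
    have hsum' := sum_update_add c l₁ 1
    have hone : update c l₁ 1 = 1 :=
      eq_one_iff_ne_zero_and_sum_eq_card.mpr ⟨update_one_ne_zero hsub h₁, by omega⟩
    exact ⟨l₁, by rw [← hone, update_idem, ← h₁, update_eq_self]⟩

theorem eq_one_or_exists_update_two_zero_eq_iff :
    (c = 1 ∨ ∃ x ∈ (Finset.univ.offDiag : Finset (L × L)),
        update (update (1 : L → ℕ) x.1 2) x.2 0 = c) ↔
      {l | c l = 0}.Subsingleton ∧ ∑ l, c l = Fintype.card L := by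
  constructor
  · rintro (rfl | ⟨⟨l₀, l₁⟩, hx, rfl⟩)
    · simp
    · have hne : l₁ ≠ l₀ := (Finset.mem_offDiag.mp hx).2.2.symm
      have hzero (l : L) (hl : update (update (1 : L → ℕ) l₀ 2) l₁ 0 l = 0) : l = l₁ := by
        simp only [update_apply, Pi.one_apply] at hl
        grind
      refine ⟨fun l hl l' hl' => (hzero l hl).trans (hzero l' hl').symm, ?_⟩
      have h₀ := sum_update_add (1 : L → ℕ) l₀ 2
      have h₁ := sum_update_add (update (1 : L → ℕ) l₀ 2) l₁ 0
      simp only [update_of_ne hne, Pi.one_apply, Finset.sum_const, Finset.card_univ,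
        smul_eq_mul, mul_one, add_zero] at h₀ h₁ ⊢
      omega
  · rintro ⟨hsub, hsum⟩
    by_cases hne : ∀ l, c l ≠ 0
    · exact .inl (eq_one_iff_ne_zero_and_sum_eq_card.mpr ⟨hne, hsum⟩)
    · push Not at hne
      obtain ⟨l₁, h₁⟩ := hne
      have hsum' := sum_update_add c l₁ 1
      obtain ⟨l₀, h₀⟩ := exists_update_one_two_eq_iff.mpr
        ⟨update_one_ne_zero hsub h₁, by omega⟩
      have hne : l₀ ≠ l₁ := by
        rintro rfl
        simpa using congrFun h₀ l₀
      exact .inr ⟨(l₀, l₁), by simpa using hne,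
        by rw [h₀, update_idem, ← h₁, update_eq_self]⟩

theorem update_two_zero_injOn :
    Set.InjOn (fun x : L × L => update (update (1 : L → ℕ) x.1 2) x.2 0)
      (Finset.univ.offDiag : Finset (L × L)) := by
  rintro ⟨a, b⟩ hab ⟨c, d⟩ hcd h
  simp only [Finset.coe_offDiag, Set.mem_offDiag] at hab hcd
  have hb := congrFun h b
  have ha := congrFun h a
  simp only [update_apply, Pi.one_apply] at ha hb
  grind

theorem prod_choose_update_one (q : ℕ) (l : L) (v : ℕ) :
    ∏ i, q.choose (update (1 : L → ℕ) l v i) = q.choose v * q ^ (Fintype.card L - 1) := by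
  simp only [apply_update fun _ => q.choose]
  rw [Finset.prod_update_of_mem (Finset.mem_univ l)]
  simp [Finset.card_sdiff]

theorem prod_choose_update_update_one (q : ℕ) {l₀ l₁ : L} (h : l₀ ≠ l₁) (v w : ℕ) :
    ∏ i, q.choose (update (update (1 : L → ℕ) l₀ v) l₁ w i) =
      q.choose w * (q.choose v * q ^ (Fintype.card L - 2)) := by
  simp only [apply_update fun _ => q.choose]
  rw [Finset.prod_update_of_mem (Finset.mem_univ l₁), Finset.prod_update_of_mem (by simpa using h)]
  simp [Finset.card_sdiff, h, Nat.sub_sub]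

end Sizes

section Lift

variable {F L κ : Type*} [Field F]

/-- The labelled configuration in `F × F^L` consisting of `(1, 0)`, `(0, (1, …, 1))` and the lifts
`(h k, e_l)` of the unit vectors `e_l`. It is the configuration of the theorem up to splitting off
the first coordinate, over any field and with any heights `h k` in place of `0, …, p - 1`. -/
def liftVec [DecidableEq L] (h : κ → F) : Unit ⊕ Unit ⊕ (L × κ) → F × (L → F)
  | .inl _ => (1, 0)
  | .inr (.inl _) => (0, 1)
  | .inr (.inr (l, k)) => (h k, Pi.single l 1)

theorem eq_zero_of_nontrivial_image {h : κ → F} {A : Prop} {f : L → Finset κ}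
    (hf : A ∨ ∃ l, (h '' f l).Nontrivial) {x : F} {b : L → F} (hA : A → x = 0)
    (hb : ∀ l, ∀ k ∈ f l, h k * x + b l = 0) : x = 0 := by
  obtain hA' | ⟨l, _, ⟨k, hk, rfl⟩, _, ⟨k', hk', rfl⟩, hne⟩ := hf
  · exact hA hA'
  · have hmul : (h k - h k') * x = 0 := by linear_combination hb l k hk - hb l k' hk'
    exact (mul_eq_zero.mp hmul).resolve_left (sub_ne_zero.mpr hne)

/-- The only functional `(y, u) ↦ x * y + ∑ l, b l * u l` on `F × F^L` that vanishes on `(1, 0)`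
(if `A`), on `(0, (1, …, 1))` (if `B`) and on `(h k, e_l)` for all `k ∈ f l` is zero. -/
def Separates [Fintype L] (h : κ → F) (A B : Prop) (f : L → Finset κ) : Prop :=
  ∀ (x : F) (b : L → F), (A → x = 0) → (B → ∑ l, b l = 0) →
    (∀ l, ∀ k ∈ f l, h k * x + b l = 0) → x = 0 ∧ b = 0

variable [Fintype L] {h : κ → F} {A B : Prop} {f : L → Finset κ}

theorem Separates.subsingleton (hf : Separates h A B f) : {l | f l = ∅}.Subsingleton := by
  classical
  intro l hl l' hl'
  by_contra hne
  have hb := (hf 0 (Pi.single l 1 - Pi.single l' 1) (fun _ => rfl) (fun _ => by simp)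
    fun i k hk => by
      have hil : i ≠ l := by rintro rfl; simp_all
      have hil' : i ≠ l' := by rintro rfl; simp_all
      simp [hil, hil']).2
  simpa [hne] using congrFun hb l

theorem Separates.nonempty (hf : Separates h A False f) (l : L) : (f l).Nonempty := by
  classical
  by_contra hl
  rw [Finset.not_nonempty_iff_eq_empty] at hl
  have hb := (hf 0 (Pi.single l 1) (fun _ => rfl) False.elim fun i k hk => by
    have hil : i ≠ l := by rintro rfl; simp_all
    simp [hil]).2
  simpa using congrFun hb l

theorem separates_false_iff (hf : A ∨ ∃ l, (h '' f l).Nontrivial) :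
    Separates h A False f ↔ ∀ l, (f l).Nonempty := by
  refine ⟨Separates.nonempty, fun hne x b hA _ hb => ?_⟩
  obtain rfl := eq_zero_of_nontrivial_image hf hA hb
  refine ⟨rfl, funext fun l => ?_⟩
  obtain ⟨k, hk⟩ := hne l
  simpa using hb l k hk

theorem separates_true_iff (hf : A ∨ ∃ l, (h '' f l).Nontrivial) :
    Separates h A True f ↔ {l | f l = ∅}.Subsingleton := by
  refine ⟨Separates.subsingleton, fun hsub x b hA hB hb => ?_⟩
  obtain rfl := eq_zero_of_nontrivial_image hf hA hb
  have hne (l : L) (hl : f l ≠ ∅) : b l = 0 := by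
    obtain ⟨k, hk⟩ := Finset.nonempty_iff_ne_empty.mpr hl
    simpa using hb l k hk
  refine ⟨rfl, funext fun l => ?_⟩
  by_cases hl : f l = ∅
  · have hsingle : ∑ l', b l' = b l :=
      Fintype.sum_eq_single l fun l' hl' => hne l' fun h' => hl' (hsub h' hl)
    exact hsingle.symm.trans (hB trivial)
  · exact hne l hl

theorem separates_false_true_singleton_iff {g : L → κ} :
    Separates h False True (fun l => {g l}) ↔ ∑ l, h (g l) ≠ 0 := by
  simp only [Separates, Finset.mem_singleton, forall_eq]
  constructor
  · intro hsep hsum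
    exact one_ne_zero (hsep 1 (fun l => -h (g l)) False.elim (by simp [hsum]) (by simp)).1
  · intro hsum x b _ hB hb
    have hb' (l : L) : b l = -(h (g l) * x) := by linear_combination hb l
    have hmul : (∑ l, h (g l)) * x = 0 := by
      simpa [hb', Finset.sum_mul] using hB
    obtain rfl := (mul_eq_zero.mp hmul).resolve_left hsum
    exact ⟨rfl, funext fun l => by simp [hb']⟩

variable [DecidableEq L]

theorem forall_dual_eq_zero_iff_separates {A B : Finset Unit} :
    (∀ φ : Module.Dual F (F × (L → F)), (∀ i ∈ labelSet A B f, φ (liftVec h i) = 0) → φ = 0) ↔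
      Separates h (() ∈ A) (() ∈ B) f := by
  simp only [forall_mem_labelSet, liftVec]
  constructor
  · intro hdual x b hA hB hb
    let φ : Module.Dual F (F × (L → F)) := .coprod (x • .id) (dotProductBilin F F b)
    have hφ : φ = 0 := hdual φ
      ⟨by simpa [φ] using hA, by simpa [φ, dotProduct] using hB,
        by simpa [φ, mul_comm x] using hb⟩
    exact ⟨by simpa [φ] using congr($hφ (1, 0)),
      funext fun l => by simpa [φ] using congr($hφ (0, Pi.single l 1))⟩
  · rintro hsep φ ⟨hA, hB, hf⟩
    have hone : ((0, 1) : F × (L → F)) = ∑ l, (0, Pi.single l 1) := by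
      ext <;> simp [Prod.fst_sum, Prod.snd_sum]
    have hlift (y : F) (l : L) :
        ((y, Pi.single l 1) : F × (L → F)) = y • (1, 0) + (0, Pi.single l 1) := by simp
    obtain ⟨hx, hb⟩ := hsep (φ (1, 0)) (fun l => φ (0, Pi.single l 1)) hA
      (by simpa [hone] using hB)
      (fun l k hk => by
        have hk' := hf l k hk
        rwa [hlift, map_add, map_smul, smul_eq_mul] at hk')
    ext l
    · simpa using hx
    · simpa using congrFun hb l

theorem formsBasis_liftVec_labelSet {A B : Finset Unit} :
    FormsBasis F (liftVec h) (labelSet A B f) ↔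
      A.card + (B.card + ∑ l, (f l).card) = Fintype.card L + 1 ∧
        Separates h (() ∈ A) (() ∈ B) f := by
  rw [formsBasis_iff_forall_dual, forall_dual_eq_zero_iff_separates, card_labelSet]
  simp [add_comm 1]

end Lift

section Bases

open Function

variable {F L κ : Type*} [Fintype L] {h : κ → F}

theorem exists_nontrivial_image_of_card_lt_sum (hh : Injective h) {f : L → Finset κ}
    (hf : Fintype.card L < ∑ l, (f l).card) : ∃ l, (h '' f l).Nontrivial := by
  obtain ⟨l, -, hl⟩ : ∃ l ∈ Finset.univ, 1 < (f l).card :=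
    Finset.exists_lt_of_sum_lt (by simpa using hf)
  exact ⟨l, (Finset.one_lt_card_iff_nontrivial.mp hl).image hh⟩

variable [Field F] [DecidableEq L]

/-- The bases of the configuration `liftVec h` whose parts in the first two summands are `A` and
`B`, each recorded by its family of fibres. -/
def liftBases (h : κ → F) (A B : Finset Unit) : Set (L → Finset κ) :=
  {f | FormsBasis F (liftVec h) (labelSet A B f)}

theorem liftBases_singleton_singleton :
    (liftBases h {()} {()} : Set (L → Finset κ)) =
      profile ⁻¹' (Finset.univ.image fun l₁ => update (1 : L → ℕ) l₁ 0 : Finset (L → ℕ)) := by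
  ext f
  have hsum : 1 + (1 + ∑ l, (f l).card) = Fintype.card L + 1 ↔
      ∑ l, (f l).card + 1 = Fintype.card L := by omega
  simp [liftBases, formsBasis_liftVec_labelSet, separates_true_iff, hsum,
    exists_update_one_zero_eq_iff, profile, and_comm]

theorem liftBases_singleton_empty :
    (liftBases h {()} ∅ : Set (L → Finset κ)) = profile ⁻¹' {1} := by
  ext f
  have hsum : 1 + ∑ l, (f l).card = Fintype.card L + 1 ↔
      ∑ l, (f l).card = Fintype.card L := by omega
  simp [liftBases, formsBasis_liftVec_labelSet, separates_false_iff, hsum,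
    eq_one_iff_ne_zero_and_sum_eq_card, profile, Finset.nonempty_iff_ne_empty, and_comm]

theorem liftBases_empty_empty (hh : Injective h) :
    (liftBases h ∅ ∅ : Set (L → Finset κ)) =
      profile ⁻¹' (Finset.univ.image fun l₀ => update (1 : L → ℕ) l₀ 2 : Finset (L → ℕ)) := by
  ext f
  have hsep : ∑ l, (f l).card = Fintype.card L + 1 ∧ Separates h False False f ↔
      (∀ l, (f l).Nonempty) ∧ ∑ l, (f l).card = Fintype.card L + 1 := by
    rw [and_comm (a := ∀ l, _)]
    refine and_congr_right fun hsum => separates_false_iff (.inr ?_)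
    exact exists_nontrivial_image_of_card_lt_sum hh (by omega)
  simp [liftBases, formsBasis_liftVec_labelSet, hsep, exists_update_one_two_eq_iff, profile,
    Finset.nonempty_iff_ne_empty]

theorem liftBases_empty_singleton (hh : Injective h) :
    (liftBases h ∅ {()} : Set (L → Finset κ)) =
      (fun (g : L → κ) l => ({g l} : Finset κ)) '' {g | ∑ l, h (g l) ≠ 0} ∪
        profile ⁻¹' (Finset.univ.offDiag.image fun x : L × L =>
          update (update (1 : L → ℕ) x.1 2) x.2 0 : Finset (L → ℕ)) := by
  ext f
  have hmem : f ∈ liftBases h ∅ {()} ↔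
      ∑ l, profile f l = Fintype.card L ∧ Separates h False True f := by
    simp [liftBases, formsBasis_liftVec_labelSet, profile, add_comm 1]
  have hzero : {l | f l = ∅} = {l | profile f l = 0} := by
    simp [profile]
  simp only [hmem, Set.mem_union, Set.mem_preimage, Finset.coe_image]
  constructor
  · rintro ⟨hsum, hsep⟩
    obtain hone | hx := eq_one_or_exists_update_two_zero_eq_iff.mpr
      ⟨hzero ▸ hsep.subsingleton, hsum⟩
    · obtain ⟨g, rfl⟩ := profile_eq_one_iff.mp hone
      exact .inl ⟨g, separates_false_true_singleton_iff.mp hsep, rfl⟩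
    · exact .inr hx
  · rintro (⟨g, hg, rfl⟩ | ⟨x, hx, hf⟩)
    · exact ⟨by simp [profile], separates_false_true_singleton_iff.mpr hg⟩
    · obtain ⟨hsub, hsum⟩ := eq_one_or_exists_update_two_zero_eq_iff.mp (.inr ⟨x, hx, hf⟩)
      have htwo : (f x.1).card = 2 := by
        simpa [profile, update_of_ne (Finset.mem_offDiag.mp hx).2.2] using (congrFun hf x.1).symm
      have hnon : (h '' f x.1).Nontrivial :=
        (Finset.one_lt_card_iff_nontrivial.mp (by omega)).image hh
      exact ⟨hsum, (separates_true_iff (.inr ⟨x.1, hnon⟩)).mpr (hzero ▸ hsub)⟩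

variable [Fintype κ]

theorem ncard_liftBases_singleton_singleton :
    (liftBases h {()} {()} : Set (L → Finset κ)).ncard =
      Fintype.card L * Fintype.card κ ^ (Fintype.card L - 1) := by
  have hC : ∀ c ∈ Finset.univ.image fun l₁ => update (1 : L → ℕ) l₁ 0,
      ∏ l, (Fintype.card κ).choose (c l) = Fintype.card κ ^ (Fintype.card L - 1) := by
    simp [prod_choose_update_one]
  rw [liftBases_singleton_singleton, ncard_profile_preimage hC,
    Finset.card_image_of_injective _ (update_one_injective zero_ne_one), Finset.card_univ]

theorem ncard_liftBases_singleton_empty :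
    (liftBases h {()} ∅ : Set (L → Finset κ)).ncard = Fintype.card κ ^ Fintype.card L := by
  rw [liftBases_singleton_empty, ncard_profile_preimage_singleton]
  simp

theorem ncard_liftBases_empty_empty (hh : Injective h) :
    (liftBases h ∅ ∅ : Set (L → Finset κ)).ncard =
      Fintype.card L * ((Fintype.card κ).choose 2 * Fintype.card κ ^ (Fintype.card L - 1)) := by
  have hC : ∀ c ∈ Finset.univ.image fun l₀ => update (1 : L → ℕ) l₀ 2,
      ∏ l, (Fintype.card κ).choose (c l) =
        (Fintype.card κ).choose 2 * Fintype.card κ ^ (Fintype.card L - 1) := by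
    simp [prod_choose_update_one]
  rw [liftBases_empty_empty hh, ncard_profile_preimage hC,
    Finset.card_image_of_injective _ (update_one_injective (by decide)), Finset.card_univ]

theorem ncard_liftBases_empty_singleton (hh : Injective h) :
    (liftBases h ∅ {()} : Set (L → Finset κ)).ncard =
      {g : L → κ | ∑ l, h (g l) ≠ 0}.ncard + Fintype.card L * (Fintype.card L - 1) *
        ((Fintype.card κ).choose 2 * Fintype.card κ ^ (Fintype.card L - 2)) := by
  have hC : ∀ c ∈ Finset.univ.offDiag.image fun x : L × L =>
        update (update (1 : L → ℕ) x.1 2) x.2 0,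
      ∏ l, (Fintype.card κ).choose (c l) =
        (Fintype.card κ).choose 2 * Fintype.card κ ^ (Fintype.card L - 2) := by
    simp only [Finset.forall_mem_image]
    rintro x hx
    simp [prod_choose_update_update_one _ (Finset.mem_offDiag.mp hx).2.2]
  have hinj : Injective fun (g : L → κ) l => ({g l} : Finset κ) :=
    Finset.singleton_injective.comp_left
  have hdisj : Disjoint ((fun (g : L → κ) l => ({g l} : Finset κ)) '' {g | ∑ l, h (g l) ≠ 0})
      (profile ⁻¹' (Finset.univ.offDiag.image fun x : L × L =>
        update (update (1 : L → ℕ) x.1 2) x.2 0 : Finset (L → ℕ))) := by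
    rw [Set.disjoint_left]
    rintro _ ⟨g, -, rfl⟩ hf
    obtain ⟨x, -, hx⟩ := Finset.mem_image.mp hf
    simpa [profile] using congrFun hx x.2
  rw [liftBases_empty_singleton hh, Set.ncard_union_eq hdisj, Set.ncard_image_of_injective _ hinj,
    ncard_profile_preimage hC, Finset.card_image_of_injOn update_two_zero_injOn,
    Finset.offDiag_card, Finset.card_univ, Nat.mul_sub_one]

end Bases

theorem ncard_sum_natCast_ne_zero {F L : Type*} [AddCommMonoidWithOne F] [CharZero F] [Fintype L]
    {p : ℕ} (hp : 0 < p) :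
    {g : L → Fin p | ∑ l, ((g l : ℕ) : F) ≠ 0}.ncard = p ^ Fintype.card L - 1 := by
  have hcompl : {g : L → Fin p | ∑ l, ((g l : ℕ) : F) ≠ 0} = {fun _ => ⟨0, hp⟩}ᶜ := by
    ext g
    simp [← Nat.cast_sum, funext_iff, Fin.ext_iff]
  classical
  rw [hcompl, Set.ncard_compl, Set.ncard_singleton, Nat.card_fun]
  simp

section RationalConfiguration

variable {r : ℕ}

/-- The splitting `F^r ≃ F × F^(r-1)` along the coordinate of index `0`. -/
def splitZero (F : Type*) [Semiring F] (hr : 0 < r) :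
    (Fin r → F) ≃ₗ[F] F × ({l : Fin r // l.val ≠ 0} → F) where
  toFun v := (v ⟨0, hr⟩, fun l => v l)
  map_add' _ _ := rfl
  map_smul' _ _ := rfl
  invFun w i := if hi : i.val ≠ 0 then w.2 ⟨i, hi⟩ else w.1
  left_inv v := by
    ext i
    by_cases hi : i.val = 0
    · obtain rfl : i = ⟨0, hr⟩ := Fin.ext hi
      simp
    · simp [hi]
  right_inv w := Prod.ext (by simp) (funext fun l => by simp [l.2])

theorem splitZero_comp_qrpVec (hr : 0 < r) (p : ℕ) :
    splitZero ℚ hr ∘ qrpVec r p = liftVec fun k : Fin p => ((k : ℕ) : ℚ) := by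
  funext x
  obtain ⟨⟩ | ⟨⟨⟩⟩ | ⟨l, k⟩ := x
  · ext l
    · simp [splitZero, qrpVec, liftVec]
    · simp [splitZero, qrpVec, liftVec, l.2]
  · ext l
    · simp [splitZero, qrpVec, liftVec]
    · simp [splitZero, qrpVec, liftVec, l.2]
  · ext l'
    · simp [splitZero, qrpVec, liftVec]
    · simp [splitZero, qrpVec, liftVec, l'.2, Pi.single_apply, Subtype.ext_iff]

theorem card_fin_val_ne_zero (hr : 0 < r) : Fintype.card {l : Fin r // l.val ≠ 0} = r - 1 := by
  obtain ⟨n, rfl⟩ := Nat.exists_eq_add_one.mpr hr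
  simp [Fintype.card_subtype_compl]

theorem natCard_qrpVec_bases (hr : 0 < r) (p : ℕ) (A B : Finset Unit)
    {P : Finset (QrpIndex r p) → Prop}
    (hP : ∀ s, P s ↔ (qrpI r p ∈ s ↔ () ∈ A) ∧ (qrpJ r p ∈ s ↔ () ∈ B)) :
    Nat.card {s : Finset (QrpIndex r p) // s.card = r ∧ FormsBasis ℚ (qrpVec r p) s ∧ P s} =
      (liftBases (fun k : Fin p => ((k : ℕ) : ℚ)) A B :
        Set ({l : Fin r // l.val ≠ 0} → Finset (Fin p))).ncard := by
  have hcard {s : Finset (QrpIndex r p)} (hs : FormsBasis ℚ (qrpVec r p) s) : s.card = r := by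
    simpa using (formsBasis_iff_forall_dual.mp hs).1
  have himage : {s | s.card = r ∧ FormsBasis ℚ (qrpVec r p) s ∧ P s} =
      labelSet A B '' liftBases (fun k : Fin p => ((k : ℕ) : ℚ)) A B := by
    rw [liftBases, ← splitZero_comp_qrpVec hr]
    refine Eq.trans ?_ (Set.image_preimage_eq_inter_range (f := labelSet A B)
      (t := {s | FormsBasis ℚ (splitZero ℚ hr ∘ qrpVec r p) s})).symm
    rw [range_labelSet]
    ext s
    simp only [formsBasis_comp_linearEquiv, Set.mem_inter_iff, Set.mem_ofPred_eq, hP]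
    exact and_iff_right_of_imp fun hs => hcard hs.1
  rw [← Set.ncard_image_of_injective _ (labelSet_injective A B), ← himage]
  rfl

theorem natCast_val_injective (F : Type*) [AddMonoidWithOne F] [CharZero F] (p : ℕ) :
    Function.Injective fun k : Fin p => ((k : ℕ) : F) :=
  Nat.cast_injective.comp Fin.val_injective

theorem qbij_eq (hr : 0 < r) (p : ℕ) : qbij r p = (r - 1) * p ^ (r - 2) := by
  rw [qbij, natCard_qrpVec_bases hr p {()} {()} (by simp), ncard_liftBases_singleton_singleton,
    card_fin_val_ne_zero hr, Fintype.card_fin, Nat.sub_sub]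

theorem qbinj_eq (hr : 0 < r) (p : ℕ) : qbinj r p = p ^ (r - 1) := by
  rw [qbinj, natCard_qrpVec_bases hr p {()} ∅ (by simp), ncard_liftBases_singleton_empty,
    card_fin_val_ne_zero hr, Fintype.card_fin]

theorem qbnij_eq (hr : 0 < r) (p : ℕ) :
    qbnij r p = (r - 1) * (p.choose 2 * p ^ (r - 2)) := by
  rw [qbnij, natCard_qrpVec_bases hr p ∅ ∅ (by simp),
    ncard_liftBases_empty_empty (natCast_val_injective ℚ p),
    card_fin_val_ne_zero hr, Fintype.card_fin, Nat.sub_sub]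

theorem qbjni_eq (hr : 0 < r) {p : ℕ} (hp : 0 < p) :
    qbjni r p = p ^ (r - 1) - 1 + (r - 1) * (r - 2) * (p.choose 2 * p ^ (r - 3)) := by
  rw [qbjni, natCard_qrpVec_bases hr p ∅ {()} (by simp),
    ncard_liftBases_empty_singleton (natCast_val_injective ℚ p),
    ncard_sum_natCast_ne_zero hp, card_fin_val_ne_zero hr, Fintype.card_fin,
    Nat.sub_sub, Nat.sub_sub]

theorem cast_qbij {K : Type*} [Ring K] (hr : 0 < r) (p : ℕ) :
    (qbij r p : K) = ((r : K) - 1) * (p : K) ^ (r - 2) := by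
  rw [qbij_eq hr, Nat.cast_mul, Nat.cast_sub hr, Nat.cast_one, Nat.cast_pow]

theorem cast_qbnij {K : Type*} [Field K] [CharZero K] (hr : 2 ≤ r) (p : ℕ) :
    (qbnij r p : K) = ((r : K) - 1) * (((p : K) - 1) / 2) * (p : K) ^ (r - 1) := by
  obtain ⟨n, rfl⟩ := Nat.exists_eq_add_of_le' hr
  rw [qbnij_eq (by omega)]
  push_cast [Nat.cast_choose_two]
  ring

theorem cast_qbinj {K : Type*} [Semiring K] (hr : 0 < r) (p : ℕ) :
    (qbinj r p : K) = (p : K) ^ (r - 1) := by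
  rw [qbinj_eq hr, Nat.cast_pow]

theorem cast_qbjni {K : Type*} [Field K] [CharZero K] (hr : 2 ≤ r) {p : ℕ} (hp : 0 < p) :
    (qbjni r p : K) = (p : K) ^ (r - 1) - 1 +
      ((r : K) - 1) * ((r : K) - 2) * (((p : K) - 1) / 2) * (p : K) ^ (r - 2) := by
  rw [qbjni_eq (by omega) hp, Nat.cast_add, Nat.cast_sub (Nat.one_le_pow _ _ hp)]
  obtain ⟨_ | n, rfl⟩ := Nat.exists_eq_add_of_le' hr
  · simp
  · push_cast [Nat.cast_choose_two]
    ring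

end RationalConfiguration

section Limit

open Filter Topology

theorem tendsto_alphaRatio_inv (n : ℕ) :
    Tendsto (fun u : ℝ => ((n : ℝ) + 1) ^ 2 * (1 - u) /
        (2 * (1 - u ^ (n + 1)) + (n + 1) * n * (1 - u)))
      (𝓝 0) (𝓝 (((n : ℝ) + 1) ^ 2 / (2 + (n + 1) * n))) := by
  have hden : (2 * (1 - 0 ^ (n + 1)) + (n + 1) * n * (1 - 0) : ℝ) ≠ 0 := by
    rw [zero_pow n.succ_ne_zero, sub_zero, mul_one, mul_one]
    positivity
  have hcont : ContinuousAt (fun u : ℝ => ((n : ℝ) + 1) ^ 2 * (1 - u) /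
      (2 * (1 - u ^ (n + 1)) + (n + 1) * n * (1 - u))) 0 :=
    ContinuousAt.div (by fun_prop) (by fun_prop) hden
  simpa [ContinuousAt] using hcont

theorem tendsto_alphaRatio {r : ℕ} (hr : 2 ≤ r) :
    Tendsto (fun p : ℕ => ((qbnij r p : ℝ) * (qbij r p : ℝ)) /
        ((qbinj r p : ℝ) * (qbjni r p : ℝ)))
      atTop (𝓝 (((r : ℝ) - 1) ^ 2 / (2 + ((r : ℝ) - 1) * ((r : ℝ) - 2)))) := by
  obtain ⟨n, rfl⟩ := Nat.exists_eq_add_of_le' hr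
  have hlim := (tendsto_alphaRatio_inv n).comp tendsto_inv_atTop_nhds_zero_nat
  have hvalue : ((n : ℝ) + 1) ^ 2 / (2 + (n + 1) * n) =
      (((n + 2 : ℕ) : ℝ) - 1) ^ 2 /
        (2 + (((n + 2 : ℕ) : ℝ) - 1) * (((n + 2 : ℕ) : ℝ) - 2)) := by
    push_cast
    ring_nf
  rw [hvalue] at hlim
  refine hlim.congr' ?_
  filter_upwards [eventually_gt_atTop 0] with p hp
  have hp₀ : (p : ℝ) ≠ 0 := by positivity
  have hscale : (p : ℝ) ^ (2 * n + 2) / 2 ≠ 0 := by positivity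
  rw [cast_qbij (by omega), cast_qbnij hr, cast_qbinj (by omega), cast_qbjni hr hp,
    Function.comp_apply, inv_pow, ← mul_div_mul_right _ _ hscale]
  simp only [Nat.add_sub_cancel, show n + 2 - 1 = n + 1 by omega]
  push_cast
  congr 1 <;> field_simp <;> ring

end Limit

theorem stmt17_general (r : ℕ) (hr : 2 ≤ r) :
    (∀ p : ℕ, 0 < p →
      (qbij r p : ℚ) = ((r : ℚ) - 1) * (p : ℚ) ^ (r - 2) ∧
      (qbnij r p : ℚ) = ((r : ℚ) - 1) * (((p : ℚ) - 1) / 2) * (p : ℚ) ^ (r - 1) ∧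
      (qbinj r p : ℚ) = (p : ℚ) ^ (r - 1) ∧
      (qbjni r p : ℚ) = (p : ℚ) ^ (r - 1) - 1 +
        ((r : ℚ) - 1) * ((r : ℚ) - 2) * (((p : ℚ) - 1) / 2) * (p : ℚ) ^ (r - 2)) ∧
    Filter.Tendsto
      (fun p : ℕ => ((qbnij r p : ℝ) * (qbij r p : ℝ)) /
        ((qbinj r p : ℝ) * (qbjni r p : ℝ)))
      Filter.atTop
      (nhds (((r : ℝ) - 1) ^ 2 / (2 + ((r : ℝ) - 1) * ((r : ℝ) - 2)))) :=
  ⟨fun _ hp => ⟨cast_qbij (by omega) _, cast_qbnij hr _, cast_qbinj (by omega) _, cast_qbjni hr hp⟩,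
    tendsto_alphaRatio hr⟩

/-- For `r ≥ 2` and any prime `p`, the basis counts of the rational configuration of
the vectors `e₁`, `v = e₂ + ⋯ + e_r`, `v_{k,ℓ} = k·e₁ + e_ℓ` (`2 ≤ ℓ ≤ r`,
`0 ≤ k < p`) in `ℚ^r` are `b_{ij} = (r−1)·p^(r−2)`,
`b^{ij} = (r−1)·((p−1)/2)·p^(r−1)`, `b_i^j = p^(r−1)` and
`b_j^i = p^(r−1) − 1 + (r−1)·(r−2)·((p−1)/2)·p^(r−2)`; consequently the α-ratio
`(b^{ij}·b_{ij})/(b_i^j·b_j^i)` converges to `(r−1)²/(2 + (r−1)·(r−2))` as `p → ∞`. -/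
theorem stmt17 (r : ℕ) (hr : 2 ≤ r) :
    (∀ p : ℕ, p.Prime →
      (qbij r p : ℚ) = ((r : ℚ) - 1) * (p : ℚ) ^ (r - 2) ∧
      (qbnij r p : ℚ) = ((r : ℚ) - 1) * (((p : ℚ) - 1) / 2) * (p : ℚ) ^ (r - 1) ∧
      (qbinj r p : ℚ) = (p : ℚ) ^ (r - 1) ∧
      (qbjni r p : ℚ) = (p : ℚ) ^ (r - 1) - 1 +
        ((r : ℚ) - 1) * ((r : ℚ) - 2) * (((p : ℚ) - 1) / 2) * (p : ℚ) ^ (r - 2)) ∧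
    Filter.Tendsto
      (fun p : ℕ => ((qbnij r p : ℝ) * (qbij r p : ℝ)) /
        ((qbinj r p : ℝ) * (qbjni r p : ℝ)))
      (Filter.atTop ⊓ Filter.principal {p : ℕ | p.Prime})
      (nhds (((r : ℝ) - 1) ^ 2 / (2 + ((r : ℝ) - 1) * ((r : ℝ) - 2)))) :=
  ⟨fun p hp => (stmt17_general r hr).1 p hp.pos, (stmt17_general r hr).2.mono_left inf_le_left⟩
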